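/- Let p be a prime with p ≡ 2 (mod 3), and let k, n be nonnegative integers such that p does not divide 3n+2. Then (p−1)·A_3(p^{2k}·n + (2p^{2k} − 2)/3) = (p^{2k+1} − 1)·A_3(n). (Here (2p^{2k} − 2)/3 is an integer since p² ≡ 1 (mod 3).) -/

import Mathlib

/-- The hook length of the cell `(i, j)` in a Young diagram `μ`:
arm length + leg length + 1. -/
def YoungDiagram.hookLength (μ : YoungDiagram) (i j : ℕ) : ℕ :=
  μ.rowLen i + μ.colLen j - i - j - 1

/-- A Young diagram (equivalently, a partition) is a 3-core if none of its
hook numbers is divisible by 3. -/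
def YoungDiagram.IsThreeCore (μ : YoungDiagram) : Prop :=
  ∀ c ∈ μ.cells, ¬ (3 ∣ μ.hookLength c.1 c.2)

/-- `a3 n` is the number of 3-core partitions of `n`. -/
noncomputable def a3 (n : ℕ) : ℕ :=
  Nat.card {μ : YoungDiagram // μ.card = n ∧ μ.IsThreeCore}

/-- `A3 n` is the number of partition pairs of `n` in which each partition is a 3-core. -/
noncomputable def A3 (n : ℕ) : ℕ :=
  Nat.card {p : YoungDiagram × YoungDiagram //
    p.1.card + p.2.card = n ∧ p.1.IsThreeCore ∧ p.2.IsThreeCore}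

/-- `B3 n` is the number of partition triples of `n` in which each partition is a 3-core. -/
noncomputable def B3 (n : ℕ) : ℕ :=
  Nat.card {p : YoungDiagram × YoungDiagram × YoungDiagram //
    p.1.card + p.2.1.card + p.2.2.card = n ∧
    p.1.IsThreeCore ∧ p.2.1.IsThreeCore ∧ p.2.2.IsThreeCore}

/-!
Reading a partition along its boundary as an abacus with three runners identifies the 3-cores with
the Eisenstein integers congruent to `1` modulo `3`; the core of size `m` corresponds to an element
of norm `3 m + 1`. As every Eisenstein integer of norm `1` modulo `3` has exactly one such associate
and there are six units, `36 * A3 n` is the number `r (3 n + 2)` of quaternions `x + y j` of reduced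
norm `N(x) + N(y) = 3 n + 2` in the order `ℤ[ω] ⊕ ℤ[ω] j`.

This order is left Euclidean. For a prime `p ≡ 2 (mod 3)` its left ideals of norm `p` are thus
principal, and there are `p + 1` of them, one for each `s` in the field `𝔽_p[ω]` with `N(s) = -1`.
An element of norm `p m` lies in exactly one of them, or in all of them if it is divisible by `p`.
Counting incidences gives the Hecke relation `(p + 1) r (m) = r (p m) + p r (m / p)`, and the values
`r (p ^ k m)` for `p ∤ m` follow by recursion on `k`.
-/

section BetaNumbers

variable {μ ν : YoungDiagram} {i j : ℕ}

/-- `IsCore t μ` says that `μ` is a `t`-core: no hook length of `μ` is divisible by `t`. -/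
def IsCore (t : ℕ) (μ : YoungDiagram) : Prop :=
  ∀ c ∈ μ.cells, ¬ t ∣ μ.hookLength c.1 c.2

/-- The beta-numbers of `μ`, normalised so that the empty diagram has beta-numbers
`-1, -2, -3, …`. Walking along the boundary of `μ`, they are the positions of the vertical steps. -/
def betaNumber (μ : YoungDiagram) (i : ℕ) : ℤ :=
  μ.rowLen i - i - 1

/-- The set of all beta-numbers of `μ` (its Maya diagram). -/
def betaSet (μ : YoungDiagram) : Set ℤ :=
  Set.range (betaNumber μ)

theorem betaNumber_strictAnti (μ : YoungDiagram) : StrictAnti (betaNumber μ) := by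
  intro i j hij
  have := μ.rowLen_anti i j hij.le
  unfold betaNumber
  omega

theorem betaSet_injective : Function.Injective betaSet := by
  intro μ ν h
  have hβ : betaNumber μ = betaNumber ν :=
    OrderDual.toDual.injective.comp_left <|
      (StrictMono.range_inj (betaNumber_strictAnti μ).dual_right
        (betaNumber_strictAnti ν).dual_right).1 <| by
          simpa only [betaSet, Set.range_comp] using congrArg (Set.image OrderDual.toDual) h
  ext ⟨i, j⟩
  have := congrFun hβ i
  simp only [YoungDiagram.mem_cells, YoungDiagram.mem_iff_lt_rowLen]
  unfold betaNumber at this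
  omega

theorem rowLen_eq_zero (h : μ.colLen 0 ≤ i) : μ.rowLen i = 0 := by
  by_contra hne
  have hmem : (i, 0) ∈ μ := YoungDiagram.mem_iff_lt_rowLen.2 (by omega)
  exact (YoungDiagram.mem_iff_lt_colLen.1 hmem).not_ge h

theorem betaNumber_of_colLen_le (h : μ.colLen 0 ≤ i) : betaNumber μ i = -i - 1 := by
  simp [betaNumber, rowLen_eq_zero h]

theorem lt_rowLen_of_mem_betaSet {z : ℤ} (h : z ∈ betaSet μ) : z < μ.rowLen 0 := by
  obtain ⟨i, rfl⟩ := h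
  have := μ.rowLen_anti 0 i i.zero_le
  unfold betaNumber
  omega

theorem mem_betaSet_of_lt {z : ℤ} (h : z < -μ.colLen 0) : z ∈ betaSet μ :=
  ⟨(-z - 1).toNat, by rw [betaNumber_of_colLen_le (by omega)]; omega⟩

theorem lt_rowLen_iff_lt_colLen : j < μ.rowLen i ↔ i < μ.colLen j := by
  rw [← YoungDiagram.mem_iff_lt_rowLen, YoungDiagram.mem_iff_lt_colLen]

theorem sub_colLen_lt_betaNumber_iff : (j : ℤ) - μ.colLen j < betaNumber μ i ↔ (i, j) ∈ μ := by
  have hrc := lt_rowLen_iff_lt_colLen (μ := μ) (i := i) (j := j)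
  rw [YoungDiagram.mem_iff_lt_rowLen]
  unfold betaNumber
  omega

theorem natCast_hookLength (h : (i, j) ∈ μ) :
    (μ.hookLength i j : ℤ) = betaNumber μ i - (j - μ.colLen j) := by
  have hrow := YoungDiagram.mem_iff_lt_rowLen.1 h
  have hcol := YoungDiagram.mem_iff_lt_colLen.1 h
  unfold betaNumber YoungDiagram.hookLength
  omega

theorem notMem_betaSet_iff {z : ℤ} : z ∉ betaSet μ ↔ ∃ j : ℕ, z = j - μ.colLen j := by
  constructor
  · intro hz
    have hex : ∃ i, betaNumber μ i < z :=
      ⟨μ.colLen 0 + z.natAbs, by rw [betaNumber_of_colLen_le (by omega)]; omega⟩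
    classical
    obtain ⟨i, hi, hmin⟩ : ∃ i, betaNumber μ i < z ∧ ∀ k < i, ¬ betaNumber μ k < z :=
      ⟨Nat.find hex, Nat.find_spec hex, fun _ ↦ Nat.find_min hex⟩
    obtain ⟨j, hj⟩ : ∃ j : ℕ, (j : ℤ) = z + i :=
      ⟨(z + i).toNat, by unfold betaNumber at hi; omega⟩
    have hcol_le : ¬ i < μ.colLen j := by
      rw [← lt_rowLen_iff_lt_colLen]
      unfold betaNumber at hi
      omega
    have hle_col : ∀ k < i, k < μ.colLen j := by
      intro k hk
      have hne : betaNumber μ (i - 1) ≠ z := fun h ↦ hz ⟨_, h⟩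
      have hlast := hmin (i - 1) (by omega)
      have hlast_lt : i - 1 < μ.colLen j := by
        rw [← lt_rowLen_iff_lt_colLen]
        unfold betaNumber at hlast hne
        omega
      omega
    have := hle_col (i - 1)
    exact ⟨j, by omega⟩
  · rintro ⟨j, rfl⟩ ⟨i, hi⟩
    have hrc := lt_rowLen_iff_lt_colLen (μ := μ) (i := i) (j := j)
    unfold betaNumber at hi
    omega

theorem sub_mul_mem_betaSet {t : ℕ} (h : ∀ z ∈ betaSet μ, z - t ∈ betaSet μ) {z : ℤ}
    (hz : z ∈ betaSet μ) (k : ℕ) : z - t * k ∈ betaSet μ := by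
  induction k with
  | zero => simpa using hz
  | succ k ih => simpa only [Nat.cast_succ, mul_add, mul_one, ← sub_sub] using h _ ih

theorem isCore_iff_forall_sub_mem_betaSet {t : ℕ} :
    IsCore t μ ↔ ∀ z ∈ betaSet μ, z - t ∈ betaSet μ := by
  constructor
  · rintro hμ _ ⟨i, rfl⟩
    by_contra hz
    obtain ⟨j, hj⟩ := notMem_betaSet_iff.1 hz
    rcases Nat.eq_zero_or_pos t with rfl | ht
    · exact hz ⟨i, by simp⟩
    have hmem : (i, j) ∈ μ := sub_colLen_lt_betaNumber_iff.1 (by omega)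
    have hhook := natCast_hookLength hmem
    exact hμ (i, j) hmem ⟨1, by simp only; omega⟩
  · rintro h ⟨i, j⟩ hmem ⟨k, hk⟩
    have hhook := natCast_hookLength hmem
    simp only at hk
    refine (notMem_betaSet_iff (μ := μ)).2 ⟨j, rfl⟩ ?_
    have hshift := sub_mul_mem_betaSet h ⟨i, rfl⟩ k
    rwa [show betaNumber μ i - t * k = j - μ.colLen j by rw [← Nat.cast_mul, ← hk]; omega] at hshift

theorem card_eq_sum_rowLen {N : ℕ} (hN : μ.colLen 0 ≤ N) :
    μ.card = ∑ i ∈ Finset.range N, μ.rowLen i := by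
  rw [YoungDiagram.card, Finset.card_eq_sum_card_fiberwise (f := Prod.fst) (t := Finset.range N)]
  · exact Finset.sum_congr rfl fun i _ ↦ by rw [YoungDiagram.rowLen_eq_card, YoungDiagram.row]
  · rintro ⟨i, j⟩ hmem
    have hlt : j < μ.rowLen i := YoungDiagram.mem_iff_lt_rowLen.1 hmem
    by_contra hi
    have := rowLen_eq_zero (μ := μ) (i := i) (hN.trans (by simpa using hi))
    omega

theorem two_mul_sum_betaNumber {N : ℕ} (hN : μ.colLen 0 ≤ N) :
    2 * ∑ i ∈ Finset.range N, betaNumber μ i = 2 * μ.card - N * (N + 1) := by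
  have hgauss : (∑ i ∈ Finset.range N, ((i : ℤ) + 1)) * 2 = N * (N + 1) := by
    have := Finset.sum_range_id_mul_two (N + 1)
    rw [Finset.sum_range_succ'] at this
    zify at this
    simpa [mul_comm] using this
  rw [card_eq_sum_rowLen hN]
  simp only [betaNumber, sub_sub, Finset.sum_sub_distrib]
  push_cast
  linear_combination -hgauss

theorem mem_image_betaNumber_range_iff {N : ℕ} (hN : μ.colLen 0 ≤ N) {z : ℤ} :
    z ∈ (Finset.range N).image (betaNumber μ) ↔ z ∈ betaSet μ ∧ -(N : ℤ) ≤ z := by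
  simp only [Finset.mem_image, Finset.mem_range]
  constructor
  · rintro ⟨i, hi, rfl⟩
    exact ⟨⟨i, rfl⟩, by unfold betaNumber; omega⟩
  · rintro ⟨⟨i, rfl⟩, hz⟩
    refine ⟨i, ?_, rfl⟩
    by_contra hi
    rw [betaNumber_of_colLen_le (by omega)] at hz
    omega

theorem exists_betaNumber_eq {s : ℕ → ℤ} (hs : StrictAnti s) {N : ℕ}
    (hN : ∀ i ≥ N, s i = -i - 1) : ∃ μ, betaNumber μ = s := by
  have hlen_anti : Antitone fun i ↦ s i + i + 1 :=
    antitone_nat_of_succ_le fun i ↦ by have := hs i.lt_add_one; push_cast; omega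
  have hlen_nonneg (i : ℕ) : 0 ≤ s i + i + 1 := by
    have h := hlen_anti (le_max_left i N)
    simp only [hN _ (le_max_right i N)] at h
    omega
  let μ : YoungDiagram :=
    { cells := (Finset.range N).biUnion fun i ↦ {i} ×ˢ Finset.range (s i + i + 1).toNat
      isLowerSet := by
        rintro ⟨i, j⟩ ⟨i', j'⟩ ⟨hi : i' ≤ i, hj : j' ≤ j⟩ hmem
        have : s i + i + 1 ≤ s i' + i' + 1 := hlen_anti hi
        simp only [Finset.singleton_product, Finset.coe_biUnion, Finset.coe_range, Set.mem_Iio,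
          Finset.coe_map, Function.Embedding.coeFn_mk, Set.mem_iUnion, Set.mem_image,
          Int.lt_toNat, Prod.mk.injEq, exists_eq_right_right, exists_and_left,
          exists_prop] at hmem ⊢
        omega }
  refine ⟨μ, funext fun i ↦ ?_⟩
  have hmem (j : ℕ) : (i, j) ∈ μ ↔ (j : ℤ) < s i + i + 1 := by
    have := hN i
    simp only [← YoungDiagram.mem_cells, μ, Finset.singleton_product, Finset.mem_biUnion,
      Finset.mem_range, Finset.mem_map, Int.lt_toNat, Function.Embedding.coeFn_mk, Prod.mk.injEq,
      exists_eq_right_right, and_iff_right_iff_imp]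
    omega
  have hrow (j : ℕ) : j < μ.rowLen i ↔ (j : ℤ) < s i + i + 1 := by
    rw [← YoungDiagram.mem_iff_lt_rowLen, hmem]
  have h₁ := hrow (μ.rowLen i)
  have h₂ := hrow (s i + i + 1).toNat
  have := hlen_nonneg i
  unfold betaNumber
  omega

theorem exists_betaSet_eq (F : Finset ℤ) (hF : ∀ z ∈ F, -(F.card : ℤ) ≤ z) :
    ∃ μ, betaSet μ = (F : Set ℤ) ∪ Set.Iio (-(F.card : ℤ)) := by
  set N := F.card with hcard
  let e := F.orderEmbOfFin hcard.symm
  let s (i : ℕ) : ℤ := if h : i < N then e (Fin.rev ⟨i, h⟩) else -i - 1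
  have hs : StrictAnti s := by
    intro i j hij
    by_cases hj : j < N
    · simp only [s, hj, hij.trans hj, dif_pos]
      exact e.strictMono (by simpa [Fin.rev_lt_rev] using hij)
    · by_cases hi : i < N
      · have : -(N : ℤ) ≤ e (Fin.rev ⟨i, hi⟩) := hF _ (F.orderEmbOfFin_mem hcard.symm _)
        simp only [s, hi, hj, dif_pos, dif_neg, not_false_iff]
        omega
      · simp only [s, hi, hj, dif_neg, not_false_iff]
        omega
  obtain ⟨μ, hμ⟩ := exists_betaNumber_eq hs (N := N) fun i hi ↦ dif_neg (by omega)
  refine ⟨μ, Set.ext fun z ↦ ?_⟩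
  have hFz : z ∈ F ↔ ∃ i, e i = z := by
    rw [← Finset.mem_coe, ← F.range_orderEmbOfFin hcard.symm, Set.mem_range]
  simp only [betaSet, hμ, Set.mem_range, Set.mem_union, Finset.mem_coe, hFz, Set.mem_Iio]
  constructor
  · rintro ⟨i, rfl⟩
    by_cases hi : i < N
    · exact .inl ⟨Fin.rev ⟨i, hi⟩, by simp [s, hi]⟩
    · exact .inr (by simp only [s, hi, dif_neg, not_false_iff]; omega)
  · rintro (⟨i, rfl⟩ | hz)
    · exact ⟨i.rev, by
        rw [show s i.rev = e i.rev.rev from dif_pos i.rev.isLt, Fin.rev_rev]⟩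
    · refine ⟨(-z - 1).toNat, ?_⟩
      rw [show s _ = _ from dif_neg (by omega)]
      omega

end BetaNumbers

section Abacus

variable {t : ℕ} [NeZero t] {μ : YoungDiagram} {a : Fin t → ℤ} {M : ℕ}

/-- The flush `t`-abacus: on the runner of residue `r` modulo `t` the beads occupy exactly the
positions `q * t + r` with `q < a r`. -/
def abacus (a : Fin t → ℤ) : Set ℤ :=
  {z | (Int.divModEquiv t z).1 < a (Int.divModEquiv t z).2}

theorem exists_eq_mul_add_fin (t : ℕ) [NeZero t] (z : ℤ) : ∃ (q : ℤ) (r : Fin t), z = q * t + r :=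
  ⟨_, _, ((Int.divModEquiv t).symm_apply_apply z).symm⟩

theorem mul_add_fin_injective (t : ℕ) [NeZero t] :
    Function.Injective fun x : (_ : Fin t) × ℤ ↦ x.2 * t + x.1 := by
  rintro ⟨r, q⟩ ⟨r', q'⟩ h
  obtain ⟨rfl, rfl⟩ := Prod.mk.inj ((Int.divModEquiv t).symm.injective (a₁ := (q, r))
    (a₂ := (q', r')) h)
  rfl

theorem mul_add_fin_mem_abacus_iff {q : ℤ} {r : Fin t} : q * t + r ∈ abacus a ↔ q < a r := by
  have h : Int.divModEquiv t (q * t + r) = (q, r) := (Int.divModEquiv t).apply_symm_apply (q, r)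
  simp only [abacus, Set.mem_ofPred_eq, h]

theorem abacus_injective : Function.Injective (abacus (t := t)) := by
  intro a b h
  funext r
  refine eq_of_forall_lt_iff fun q ↦ ?_
  rw [← mul_add_fin_mem_abacus_iff, ← mul_add_fin_mem_abacus_iff, h]

theorem sub_mem_abacus {z : ℤ} (hz : z ∈ abacus a) : z - t ∈ abacus a := by
  obtain ⟨q, r, rfl⟩ := exists_eq_mul_add_fin t z
  rw [mul_add_fin_mem_abacus_iff] at hz
  rw [show q * t + r - t = (q - 1) * t + r by ring, mul_add_fin_mem_abacus_iff]
  omega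

theorem neg_mul_le_mul_add_fin_iff {t M : ℕ} {q : ℤ} {r : Fin t} :
    -(t * M : ℤ) ≤ q * t + r ↔ -M ≤ q := by
  have hr : (r : ℤ) < t := by exact_mod_cast r.isLt
  constructor <;> intro h <;> nlinarith

theorem IsCore.exists_betaSet_eq_abacus (hμ : IsCore t μ) :
    ∃ a : Fin t → ℤ, betaSet μ = abacus a := by
  have hdown := isCore_iff_forall_sub_mem_betaSet.1 hμ
  have ht : (0 : ℤ) < t := by exact_mod_cast NeZero.pos t
  have hrunner (r : Fin t) : ∃ n : ℤ, ∀ q : ℤ, q * t + r ∈ betaSet μ ↔ q < n := by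
    obtain ⟨n, hn, hmax⟩ := Int.exists_greatest_of_bdd (P := fun q ↦ q * t + r ∈ betaSet μ)
      ⟨μ.rowLen 0, fun q hq ↦ by nlinarith [lt_rowLen_of_mem_betaSet hq]⟩
      ⟨-μ.colLen 0 - 1, mem_betaSet_of_lt (by nlinarith [Int.ofNat_lt.2 r.isLt])⟩
    refine ⟨n + 1, fun q ↦ ⟨fun hq ↦ Int.lt_add_one_of_le (hmax q hq), fun hq ↦ ?_⟩⟩
    have hshift := sub_mul_mem_betaSet hdown hn (n - q).toNat
    rwa [Int.toNat_of_nonneg (by omega),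
      show n * t + r - t * (n - q) = q * t + r by ring] at hshift
  choose a ha using hrunner
  refine ⟨a, Set.ext fun z ↦ ?_⟩
  obtain ⟨q, r, rfl⟩ := exists_eq_mul_add_fin t z
  rw [ha, mul_add_fin_mem_abacus_iff]

/-- The beads of `abacus a` at positions at least `-(t * M)`. -/
noncomputable def beadWindow (a : Fin t → ℤ) (M : ℕ) : Finset ℤ :=
  (Finset.univ.sigma fun r ↦ Finset.Ico (-M : ℤ) (a r)).image fun x ↦ x.2 * t + x.1

theorem mem_beadWindow_iff {z : ℤ} : z ∈ beadWindow a M ↔ z ∈ abacus a ∧ -(t * M : ℤ) ≤ z := by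
  obtain ⟨q, r, rfl⟩ := exists_eq_mul_add_fin t z
  rw [beadWindow, (mul_add_fin_injective t).mem_finset_image (a := ⟨r, q⟩),
    mul_add_fin_mem_abacus_iff, neg_mul_le_mul_add_fin_iff]
  simp [and_comm]

theorem sum_beadWindow (f : ℤ → ℤ) :
    ∑ z ∈ beadWindow a M, f z = ∑ r, ∑ q ∈ Finset.Ico (-M : ℤ) (a r), f (q * t + r) := by
  rw [beadWindow, Finset.sum_image (mul_add_fin_injective t).injOn, Finset.sum_sigma]

theorem card_beadWindow (hM : ∀ r, -M ≤ a r) :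
    ((beadWindow a M).card : ℤ) = ∑ r, a r + t * M := by
  have h (r : Fin t) : ((a r + M).toNat : ℤ) = a r + M := Int.toNat_of_nonneg (by linarith [hM r])
  rw [Finset.card_eq_sum_ones, Nat.cast_sum, Nat.cast_one, sum_beadWindow fun _ ↦ 1]
  simp [h, Finset.sum_add_distrib]

theorem neg_le_of_betaSet_eq_abacus (h : betaSet μ = abacus a) (hM : μ.colLen 0 ≤ t * M)
    (r : Fin t) : -M ≤ a r := by
  suffices hmem : (-M - 1 : ℤ) * t + r ∈ betaSet μ by
    rw [h, mul_add_fin_mem_abacus_iff] at hmem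
    omega
  apply mem_betaSet_of_lt
  zify at hM
  linarith [Int.ofNat_lt.2 r.isLt]

theorem image_betaNumber_range_eq_beadWindow (h : betaSet μ = abacus a)
    (hM : μ.colLen 0 ≤ t * M) :
    (Finset.range (t * M)).image (betaNumber μ) = beadWindow a M := by
  ext z
  rw [mem_image_betaNumber_range_iff hM, mem_beadWindow_iff, h, Nat.cast_mul]

theorem sum_eq_zero_of_betaSet_eq_abacus (h : betaSet μ = abacus a) : ∑ r, a r = 0 := by
  have hM : μ.colLen 0 ≤ t * μ.colLen 0 := Nat.le_mul_of_pos_left _ (NeZero.pos t)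
  have hcard := card_beadWindow (neg_le_of_betaSet_eq_abacus h hM)
  rw [← image_betaNumber_range_eq_beadWindow h hM,
    Finset.card_image_of_injective _ (betaNumber_strictAnti μ).injective,
    Finset.card_range] at hcard
  push_cast at hcard
  linarith

theorem two_mul_sum_Ico_int {m n : ℤ} (h : m ≤ n) :
    2 * ∑ q ∈ Finset.Ico m n, q = n * (n - 1) - m * (m - 1) := by
  induction n, h using Int.leInduction with
  | base => simp
  | succ n hn ih =>
    rw [← Order.succ_eq_add_one, ← Finset.insert_Ico_right_eq_Ico_succ hn,
      Finset.sum_insert Finset.right_notMem_Ico, mul_add, ih, Order.succ_eq_add_one]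
    ring

theorem sum_fin_val_mul_two (t : ℕ) : (∑ r : Fin t, (r : ℤ)) * 2 = t * (t - 1) := by
  induction t with
  | zero => simp
  | succ t ih =>
    rw [Fin.sum_univ_castSucc, add_mul]
    simp only [Fin.val_castSucc, Fin.val_last, ih]
    push_cast
    ring

theorem two_mul_card_of_betaSet_eq_abacus (h : betaSet μ = abacus a) :
    2 * (μ.card : ℤ) = t * ∑ r, a r ^ 2 + 2 * ∑ r, r * a r := by
  set M := μ.colLen 0
  have hM : M ≤ t * M := Nat.le_mul_of_pos_left _ (NeZero.pos t)
  have hrunner (r : Fin t) : 2 * ∑ q ∈ Finset.Ico (-M : ℤ) (a r), (q * t + r) =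
      t * a r ^ 2 - t * a r + 2 * (r * a r) + (r * 2 * M - t * (M * (M + 1))) := by
    have hle := neg_le_of_betaSet_eq_abacus h hM r
    have hcard : ((a r - -M).toNat : ℤ) = a r + M := by omega
    rw [Finset.sum_add_distrib, ← Finset.sum_mul, Finset.sum_const, Int.card_Ico, nsmul_eq_mul,
      hcard]
    linear_combination t * two_mul_sum_Ico_int hle
  have hsum : ∑ i ∈ Finset.range (t * M), betaNumber μ i =
      ∑ r, ∑ q ∈ Finset.Ico (-M : ℤ) (a r), (q * t + r) := by
    rw [← sum_beadWindow fun z ↦ z, ← image_betaNumber_range_eq_beadWindow h hM,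
      Finset.sum_image (betaNumber_strictAnti μ).injective.injOn]
  have hβ := two_mul_sum_betaNumber hM
  rw [hsum, Finset.mul_sum, Finset.sum_congr rfl fun r _ ↦ hrunner r] at hβ
  simp only [Finset.sum_add_distrib, Finset.sum_sub_distrib, ← Finset.mul_sum, ← Finset.sum_mul,
    sum_fin_val_mul_two, sum_eq_zero_of_betaSet_eq_abacus h, Finset.sum_const, Finset.card_univ,
    Fintype.card_fin, nsmul_eq_mul] at hβ
  push_cast at hβ
  linear_combination -hβ

theorem exists_betaSet_eq_abacus (ha : ∑ r, a r = 0) : ∃ μ, betaSet μ = abacus a := by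
  obtain ⟨M, hM⟩ : ∃ M : ℕ, ∀ r, -M ≤ a r :=
    ⟨∑ r, (a r).natAbs, fun r ↦ by
      have := Finset.single_le_sum (f := fun r ↦ (a r).natAbs) (fun _ _ ↦ Nat.zero_le _)
        (Finset.mem_univ r)
      omega⟩
  have hcard : ((beadWindow a M).card : ℤ) = t * M := by rw [card_beadWindow hM, ha, zero_add]
  obtain ⟨μ, hμ⟩ := exists_betaSet_eq (beadWindow a M) fun z hz ↦ by
    rw [hcard]; exact (mem_beadWindow_iff.1 hz).2
  refine ⟨μ, hμ.trans (Set.ext fun z ↦ ?_)⟩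
  obtain ⟨q, r, rfl⟩ := exists_eq_mul_add_fin t z
  rw [Set.mem_union, Finset.mem_coe, mem_beadWindow_iff, Set.mem_Iio, hcard, ← not_le,
    neg_mul_le_mul_add_fin_iff, mul_add_fin_mem_abacus_iff]
  have := hM r
  omega

/-- The `t`-core whose abacus has bead counts `a`; every `t`-core arises exactly once this way. -/
noncomputable def coreOfBeads (a : {a : Fin t → ℤ // ∑ r, a r = 0}) :
    {μ : YoungDiagram // IsCore t μ} :=
  ⟨(exists_betaSet_eq_abacus a.2).choose, isCore_iff_forall_sub_mem_betaSet.2 fun z hz ↦ by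
    rw [(exists_betaSet_eq_abacus a.2).choose_spec] at hz ⊢
    exact sub_mem_abacus hz⟩

theorem betaSet_coreOfBeads (a : {a : Fin t → ℤ // ∑ r, a r = 0}) :
    betaSet (coreOfBeads a).1 = abacus a.1 :=
  (exists_betaSet_eq_abacus a.2).choose_spec

theorem coreOfBeads_bijective (t : ℕ) [NeZero t] : Function.Bijective (coreOfBeads (t := t)) := by
  refine ⟨fun a b hab ↦ Subtype.ext (abacus_injective ?_), fun ⟨μ, hμ⟩ ↦ ?_⟩
  · rw [← betaSet_coreOfBeads, ← betaSet_coreOfBeads, hab]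
  · obtain ⟨a, ha⟩ := hμ.exists_betaSet_eq_abacus
    refine ⟨⟨a, sum_eq_zero_of_betaSet_eq_abacus ha⟩, Subtype.ext (betaSet_injective ?_)⟩
    rw [betaSet_coreOfBeads, ha]

theorem two_mul_card_coreOfBeads (a : {a : Fin t → ℤ // ∑ r, a r = 0}) :
    2 * ((coreOfBeads a).1.card : ℤ) = t * ∑ r, a.1 r ^ 2 + 2 * ∑ r, r * a.1 r :=
  two_mul_card_of_betaSet_eq_abacus (betaSet_coreOfBeads a)

end Abacus

theorem card_norm_eq_mul_card_sub_one (K L : Type*) [Field K] [Field L] [Algebra K L] [Finite L]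
    {c : K} (hc : c ≠ 0) :
    Nat.card {x : L // Algebra.norm K x = c} * (Nat.card K - 1) = Nat.card L - 1 := by
  have := Finite.of_injective _ (algebraMap K L).injective
  let f : Lˣ →* Kˣ := Units.map (Algebra.norm K)
  have hf : Function.Surjective f := FiniteField.unitsMap_norm_surjective K L
  have hfiber : {x : L // Algebra.norm K x = c} ≃ f ⁻¹' {Units.mk0 c hc} :=
    { toFun x := ⟨Units.mk0 x.1 fun h ↦ hc (by rw [← x.2, h, Algebra.norm_zero]), Units.ext x.2⟩
      invFun u := ⟨u.1, congrArg Units.val u.2⟩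
      left_inv _ := rfl
      right_inv _ := Subtype.ext (Units.ext rfl) }
  rw [Nat.card_congr (hfiber.trans (MonoidHom.fiberEquivKerOfSurjective hf _)),
    ← Nat.card_units, ← Nat.card_units, ← Subgroup.card_mul_index f.ker, Subgroup.index_ker,
    f.range_eq_top.2 hf, Subgroup.card_top]

/-- The Eisenstein integers `R[ω]`, `ω² + ω + 1 = 0`, with coefficients in `R`. -/
abbrev Eisenstein (R : Type*) [CommRing R] : Type _ :=
  QuadraticAlgebra R (-1) (-1)

namespace Eisenstein

open QuadraticAlgebra

variable {R : Type*} [CommRing R]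

theorem norm_eq (z : Eisenstein R) : z.norm = z.re ^ 2 - z.re * z.im + z.im ^ 2 := by
  rw [norm_def]
  ring

theorem four_mul_norm (z : Eisenstein R) : 4 * z.norm = (2 * z.re - z.im) ^ 2 + 3 * z.im ^ 2 := by
  rw [norm_eq]
  ring

theorem norm_nonneg (z : Eisenstein ℤ) : 0 ≤ z.norm := by
  linarith [four_mul_norm z, sq_nonneg (2 * z.re - z.im), sq_nonneg z.im]

theorem re_sq_le_two_mul_norm (z : Eisenstein ℤ) : z.re ^ 2 ≤ 2 * z.norm := by
  rw [norm_eq]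
  linarith [sq_nonneg (z.re - z.im), sq_nonneg z.im]

theorem im_sq_le_two_mul_norm (z : Eisenstein ℤ) : z.im ^ 2 ≤ 2 * z.norm := by
  rw [norm_eq]
  linarith [sq_nonneg (z.re - z.im), sq_nonneg z.re]

theorem norm_eq_zero_iff {z : Eisenstein ℤ} : z.norm = 0 ↔ z = 0 := by
  refine ⟨fun h ↦ ?_, fun h ↦ by rw [h, QuadraticAlgebra.norm_zero]⟩
  have hre := re_sq_le_two_mul_norm z
  have him := im_sq_le_two_mul_norm z
  rw [h, mul_zero] at hre him
  ext
  · exact pow_eq_zero_iff two_ne_zero |>.1 (hre.antisymm (sq_nonneg _))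
  · exact pow_eq_zero_iff two_ne_zero |>.1 (him.antisymm (sq_nonneg _))

theorem finite_setOf_norm_le (m : ℤ) : {z : Eisenstein ℤ | z.norm ≤ m}.Finite := by
  have hbox := Set.finite_Icc (-(2 * m)) (2 * m)
  refine ((hbox.prod hbox).preimage (equivProd _ _).injective.injOn).subset fun z hz ↦ ?_
  have hre := (Int.natAbs_le_self_sq z.re).trans (re_sq_le_two_mul_norm z)
  have him := (Int.natAbs_le_self_sq z.im).trans (im_sq_le_two_mul_norm z)
  rw [← Int.abs_eq_natAbs] at hre him
  have hz' : 2 * z.norm ≤ 2 * m := by rwa [mul_le_mul_iff_right₀ two_pos]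
  exact ⟨abs_le.1 (hre.trans hz'), abs_le.1 (him.trans hz')⟩

theorem exists_abs_sub_two_mul_mul_le {n : ℤ} (hn : 0 < n) (x : ℤ) :
    ∃ q : ℤ, |x - 2 * n * q| ≤ n := by
  refine ⟨(x + n) / (2 * n), ?_⟩
  have hdiv := Int.emod_add_mul_ediv (x + n) (2 * n)
  have hlow := Int.emod_nonneg (x + n) (by omega : 2 * n ≠ 0)
  have hupp := Int.emod_lt_of_pos (x + n) (by omega : 0 < 2 * n)
  rw [abs_le]
  constructor <;> linarith

theorem exists_sixteen_mul_norm_sub_le {n : ℤ} (hn : 0 < n) (z : Eisenstein ℤ) :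
    ∃ q : Eisenstein ℤ, 16 * (z - n • q).norm ≤ 7 * n ^ 2 := by
  obtain ⟨y, hy⟩ := exists_abs_sub_two_mul_mul_le hn (2 * z.im)
  obtain ⟨x, hx⟩ := exists_abs_sub_two_mul_mul_le hn (2 * z.re - (z.im - n * y))
  refine ⟨⟨x, y⟩, ?_⟩
  have hsq_y := sq_le_sq' (abs_le.1 hy).1 (abs_le.1 hy).2
  have hsq_x := sq_le_sq' (abs_le.1 hx).1 (abs_le.1 hx).2
  have hnorm := four_mul_norm (z - n • (⟨x, y⟩ : Eisenstein ℤ))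
  simp only [re_sub, im_sub, re_smul, im_smul, smul_eq_mul] at hnorm
  linarith

/-- Reduction of the coefficients modulo `m`. -/
def reduction (m : ℕ) : Eisenstein ℤ →+* Eisenstein (ZMod m) where
  toFun z := ⟨z.re, z.im⟩
  map_one' := by ext <;> simp
  map_mul' x y := by ext <;> simp
  map_zero' := by ext <;> simp
  map_add' x y := by ext <;> simp

theorem norm_reduction (m : ℕ) (z : Eisenstein ℤ) : (reduction m z).norm = (z.norm : ZMod m) := by
  simp [reduction, norm_eq]

section PrimeTwoModThree

variable {p : ℕ} [hp : Fact p.Prime]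

theorem fact_ne_of_mod_three_eq_two (hp3 : p % 3 = 2) :
    Fact (∀ r : ZMod p, r ^ 2 ≠ -1 + -1 * r) := by
  refine ⟨fun r hr ↦ ?_⟩
  have hcube : r ^ 3 = 1 := by linear_combination (r - 1) * hr
  have hne : r ≠ 0 := by rintro rfl; simp at hr
  have hone : r = 1 := by
    have hfermat := ZMod.pow_card_sub_one_eq_one hne
    rwa [show p - 1 = 3 * (p / 3) + 1 by omega, pow_succ, pow_mul, hcube, one_pow, one_mul]
      at hfermat
  have hthree : ((3 : ℕ) : ZMod p) = 0 := by
    rw [hone] at hr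
    push_cast
    linear_combination hr
  have hdvd := (ZMod.natCast_eq_zero_iff 3 p).1 hthree
  have := (Nat.prime_dvd_prime_iff_eq hp.out Nat.prime_three).1 hdvd
  omega

theorem card_norm_eq (hp3 : p % 3 = 2) {c : ZMod p} (hc : c ≠ 0) :
    Nat.card {z : Eisenstein (ZMod p) // z.norm = c} = p + 1 := by
  have := fact_ne_of_mod_three_eq_two hp3
  have hcard : Nat.card (Eisenstein (ZMod p)) = p ^ 2 := by
    rw [Nat.card_congr (equivProd _ _), Nat.card_prod, Nat.card_zmod, sq]
  have := Nat.finite_of_card_ne_zero (hcard ▸ pow_ne_zero 2 hp.out.ne_zero)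
  have hmul := card_norm_eq_mul_card_sub_one (ZMod p) (Eisenstein (ZMod p)) hc
  have hnorm (z : Eisenstein (ZMod p)) : Algebra.norm (ZMod p) z = z.norm :=
    det_toLinearMap_eq_norm z
  have hsq : p ^ 2 - 1 = (p + 1) * (p - 1) := by rw [← Nat.sq_sub_sq, one_pow]
  simp_rw [hnorm] at hmul
  rw [hcard, Nat.card_zmod, hsq] at hmul
  exact Nat.eq_of_mul_eq_mul_right (Nat.sub_pos_of_lt hp.out.one_lt) hmul

end PrimeTwoModThree

end Eisenstein

/-- The quaternion order `R[ω] ⊕ R[ω] j` with `j² = -1` and `j z = z̄ j` for `z ∈ R[ω]`. -/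
abbrev EisensteinQuaternion (R : Type*) [CommRing R] : Type _ :=
  QuaternionAlgebra R (-1) (-1) (-1)

namespace EisensteinQuaternion

variable {R : Type*} [CommRing R]

/-- The coordinates `(x, y)` of the quaternion `x + y j`. -/
@[simps]
def split : EisensteinQuaternion R ≃+ Eisenstein R × Eisenstein R where
  toFun w := (⟨w.re, w.imI⟩, ⟨w.imJ, w.imK⟩)
  invFun z := ⟨z.1.re, z.1.im, z.2.re, z.2.im⟩
  map_add' _ _ := rfl

theorem split_mul (v w : EisensteinQuaternion R) :
    split (v * w) = ((split v).1 * (split w).1 - (split v).2 * star (split w).2,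
      (split v).1 * (split w).2 + (split v).2 * star (split w).1) := by
  ext <;>
    simp only [split_apply, QuaternionAlgebra.re_mul, QuaternionAlgebra.imI_mul,
      QuaternionAlgebra.imJ_mul, QuaternionAlgebra.imK_mul, QuadraticAlgebra.mk_mul_mk,
      QuadraticAlgebra.star_mk, QuadraticAlgebra.mk_sub_mk, QuadraticAlgebra.re_add,
      QuadraticAlgebra.im_add] <;>
    ring

/-- The reduced norm `x + y j ↦ N(x) + N(y)`. -/
def reducedNorm : EisensteinQuaternion R →*₀ R where
  toFun w := (split w).1.norm + (split w).2.norm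
  map_zero' := by simp [Eisenstein.norm_eq]
  map_one' := by simp [Eisenstein.norm_eq]
  map_mul' v w := by
    simp only [Eisenstein.norm_eq, split_apply, QuaternionAlgebra.re_mul,
      QuaternionAlgebra.imI_mul, QuaternionAlgebra.imJ_mul, QuaternionAlgebra.imK_mul]
    ring

theorem reducedNorm_apply (w : EisensteinQuaternion R) :
    reducedNorm w = (split w).1.norm + (split w).2.norm := rfl

theorem reducedNorm_eq (w : EisensteinQuaternion R) :
    reducedNorm w =
      w.re ^ 2 - w.re * w.imI + w.imI ^ 2 + (w.imJ ^ 2 - w.imJ * w.imK + w.imK ^ 2) := by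
  simp only [reducedNorm_apply, Eisenstein.norm_eq, split_apply]

theorem star_mul_self_eq_reducedNorm (w : EisensteinQuaternion R) :
    star w * w = (reducedNorm w : R) := by
  rw [QuaternionAlgebra.star_mul_eq_coe, reducedNorm_eq]
  congr 1
  simp only [QuaternionAlgebra.re_mul, QuaternionAlgebra.re_star, QuaternionAlgebra.imI_star,
    QuaternionAlgebra.imJ_star, QuaternionAlgebra.imK_star]
  ring

theorem reducedNorm_star (w : EisensteinQuaternion R) : reducedNorm (star w) = reducedNorm w := by
  simp only [reducedNorm_eq, QuaternionAlgebra.re_star, QuaternionAlgebra.imI_star,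
    QuaternionAlgebra.imJ_star, QuaternionAlgebra.imK_star]
  ring

theorem reducedNorm_smul (r : R) (w : EisensteinQuaternion R) :
    reducedNorm (r • w) = r ^ 2 * reducedNorm w := by
  simp only [reducedNorm_eq, QuaternionAlgebra.re_smul, QuaternionAlgebra.imI_smul,
    QuaternionAlgebra.imJ_smul, QuaternionAlgebra.imK_smul, smul_eq_mul]
  ring

theorem reducedNorm_nonneg (w : EisensteinQuaternion ℤ) : 0 ≤ reducedNorm w :=
  add_nonneg (Eisenstein.norm_nonneg _) (Eisenstein.norm_nonneg _)

theorem reducedNorm_eq_zero_iff {w : EisensteinQuaternion ℤ} : reducedNorm w = 0 ↔ w = 0 := by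
  rw [reducedNorm_apply, add_eq_zero_iff_of_nonneg (Eisenstein.norm_nonneg _)
    (Eisenstein.norm_nonneg _), Eisenstein.norm_eq_zero_iff, Eisenstein.norm_eq_zero_iff,
    ← Prod.mk_eq_zero, Prod.mk.eta, EmbeddingLike.map_eq_zero_iff]

theorem reducedNorm_pos_iff {w : EisensteinQuaternion ℤ} : 0 < reducedNorm w ↔ w ≠ 0 := by
  rw [(reducedNorm_nonneg w).lt_iff_ne', ne_eq, reducedNorm_eq_zero_iff]

instance : NoZeroDivisors (EisensteinQuaternion ℤ) where
  eq_zero_or_eq_zero_of_mul_eq_zero {v w} h := by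
    rwa [← reducedNorm_eq_zero_iff, map_mul, mul_eq_zero, reducedNorm_eq_zero_iff,
      reducedNorm_eq_zero_iff] at h

theorem exists_reducedNorm_sub_smul_lt {n : ℤ} (hn : 0 < n) (w : EisensteinQuaternion ℤ) :
    ∃ q : EisensteinQuaternion ℤ, reducedNorm (w - n • q) < n ^ 2 := by
  obtain ⟨x, hx⟩ := Eisenstein.exists_sixteen_mul_norm_sub_le hn (split w).1
  obtain ⟨y, hy⟩ := Eisenstein.exists_sixteen_mul_norm_sub_le hn (split w).2
  refine ⟨split.symm (x, y), ?_⟩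
  rw [reducedNorm_apply, map_sub, map_zsmul, AddEquiv.apply_symm_apply]
  change (_ - n • x).norm + (_ - n • y).norm < n ^ 2
  have := pow_pos hn 2
  linarith

theorem exists_reducedNorm_sub_mul_lt {g : EisensteinQuaternion ℤ} (hg : g ≠ 0)
    (w : EisensteinQuaternion ℤ) :
    ∃ q : EisensteinQuaternion ℤ, reducedNorm (w - q * g) < reducedNorm g := by
  have hpos := reducedNorm_pos_iff.2 hg
  obtain ⟨q, hq⟩ := exists_reducedNorm_sub_smul_lt hpos (w * star g)
  refine ⟨q, lt_of_mul_lt_mul_right ?_ hpos.le⟩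
  have hmul : (w - q * g) * star g = w * star g - reducedNorm g • q := by
    rw [sub_mul, mul_assoc, ← star_comm_self', star_mul_self_eq_reducedNorm,
      QuaternionAlgebra.mul_coe_eq_smul]
  rwa [← hmul, map_mul, reducedNorm_star, sq] at hq

/-- The Euclidean algorithm: a nonzero element of least norm generates a left ideal. -/
instance : IsPrincipalIdealRing (EisensteinQuaternion ℤ) where
  principal I := by
    rcases eq_or_ne I ⊥ with rfl | hI
    · exact bot_isPrincipal
    obtain ⟨g, ⟨hgI, hg0⟩, hmin⟩ :=
      (measure fun w ↦ (reducedNorm w).toNat).wf.has_min {w | w ∈ I ∧ w ≠ 0} (I.ne_bot_iff.1 hI)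
    refine ⟨g, le_antisymm (fun w hw ↦ ?_) ((Ideal.span_singleton_le_iff_mem I).2 hgI)⟩
    obtain ⟨q, hq⟩ := exists_reducedNorm_sub_mul_lt hg0 w
    have hmem : w - q * g ∈ I := I.sub_mem hw (I.mul_mem_left q hgI)
    have hzero : w - q * g = 0 := by
      by_contra hne
      refine hmin _ ⟨hmem, hne⟩ ?_
      exact (Int.toNat_lt_toNat (reducedNorm_pos_iff.2 hg0)).2 hq
    exact Ideal.mem_span_singleton'.2 ⟨q, (sub_eq_zero.1 hzero).symm⟩

/-- Reduction of the coefficients modulo `m`. -/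
@[simps]
def reduction (m : ℕ) : EisensteinQuaternion ℤ →+* EisensteinQuaternion (ZMod m) where
  toFun w := ⟨w.re, w.imI, w.imJ, w.imK⟩
  map_one' := by ext <;> simp
  map_mul' v w := by ext <;> simp
  map_zero' := by ext <;> simp
  map_add' v w := by ext <;> simp

theorem reducedNorm_reduction (m : ℕ) (w : EisensteinQuaternion ℤ) :
    reducedNorm (reduction m w) = ((reducedNorm w : ℤ) : ZMod m) := by
  simp [reducedNorm_eq]

theorem reduction_surjective (m : ℕ) : Function.Surjective (reduction m) := by
  rintro ⟨x, y, z, t⟩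
  obtain ⟨x, rfl⟩ := ZMod.intCast_surjective x
  obtain ⟨y, rfl⟩ := ZMod.intCast_surjective y
  obtain ⟨z, rfl⟩ := ZMod.intCast_surjective z
  obtain ⟨t, rfl⟩ := ZMod.intCast_surjective t
  exact ⟨⟨x, y, z, t⟩, rfl⟩

theorem reduction_eq_zero_iff {m : ℕ} {w : EisensteinQuaternion ℤ} :
    reduction m w = 0 ↔ ∃ v : EisensteinQuaternion ℤ, w = (m : ℤ) • v := by
  refine ⟨fun h ↦ ?_, ?_⟩
  · obtain ⟨⟨x, hx⟩, ⟨y, hy⟩, ⟨z, hz⟩, ⟨t, ht⟩⟩ :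
        (m : ℤ) ∣ w.re ∧ (m : ℤ) ∣ w.imI ∧ (m : ℤ) ∣ w.imJ ∧ (m : ℤ) ∣ w.imK := by
      simpa [QuaternionAlgebra.ext_iff, ZMod.intCast_zmod_eq_zero_iff_dvd] using h
    exact ⟨⟨x, y, z, t⟩, QuaternionAlgebra.ext hx hy hz ht⟩
  · rintro ⟨v, rfl⟩
    ext <;> simp

/-- The left ideal of the quaternions `w` whose reduction modulo `p` is annihilated by `1 + s̄ j`.
When `p ≡ 2 (mod 3)`, letting `s` run over the solutions of `N(s) = -1` gives the `p + 1` left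
ideals of reduced norm `p`. -/
def lineIdeal (p : ℕ) (s : Eisenstein (ZMod p)) : Ideal (EisensteinQuaternion ℤ) :=
  Ideal.comap (reduction p)
    (LinearMap.ker (LinearMap.toSpanSingleton _ _ (split.symm (1, star s))))

section LineIdeal

variable {p : ℕ} {s : Eisenstein (ZMod p)}

theorem mem_lineIdeal_iff (hs : s.norm = -1) {w : EisensteinQuaternion ℤ} :
    w ∈ lineIdeal p s ↔ (split (reduction p w)).1 = s * (split (reduction p w)).2 := by
  have hstar : s * star s = -1 := by
    rw [← QuadraticAlgebra.algebraMap_norm_eq_mul_star, hs, map_neg, map_one]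
  rw [lineIdeal, Ideal.mem_comap, LinearMap.mem_ker, LinearMap.toSpanSingleton_apply, smul_eq_mul,
    ← split.map_eq_zero_iff, split_mul, AddEquiv.apply_symm_apply, Prod.mk_eq_zero]
  simp only [star_one, mul_one, star_star]
  refine ⟨fun h ↦ by linear_combination h.1, fun h ↦ ⟨by linear_combination h, ?_⟩⟩
  linear_combination star s * h + (split (reduction p w)).2 * hstar

theorem mem_lineIdeal_of_reduction_eq_zero {w : EisensteinQuaternion ℤ} (hw : reduction p w = 0) :
    w ∈ lineIdeal p s := by
  rw [lineIdeal, Ideal.mem_comap, hw]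
  exact zero_mem _

theorem dvd_reducedNorm_of_mem_lineIdeal (hs : s.norm = -1) {w : EisensteinQuaternion ℤ}
    (hw : w ∈ lineIdeal p s) : (p : ℤ) ∣ reducedNorm w := by
  rw [← ZMod.intCast_zmod_eq_zero_iff_dvd, ← reducedNorm_reduction, reducedNorm_apply,
    (mem_lineIdeal_iff hs).1 hw, map_mul, hs]
  ring

variable [hp : Fact p.Prime]

theorem exists_mem_lineIdeal_reduction_ne_zero (hs : s.norm = -1) :
    ∃ w ∈ lineIdeal p s, reduction p w ≠ 0 := by
  obtain ⟨w, hw⟩ := reduction_surjective p (split.symm (s, 1))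
  refine ⟨w, (mem_lineIdeal_iff hs).2 ?_, ?_⟩
  · rw [hw, AddEquiv.apply_symm_apply, mul_one]
  · rw [hw, ne_eq, EmbeddingLike.map_eq_zero_iff, Prod.mk_eq_zero]
    exact fun h ↦ one_ne_zero h.2

theorem exists_lineIdeal_eq_span (hs : s.norm = -1) :
    ∃ g : EisensteinQuaternion ℤ, reducedNorm g = p ∧ lineIdeal p s = Ideal.span {g} := by
  obtain ⟨g, hspan⟩ := (IsPrincipalIdealRing.principal (lineIdeal p s)).principal
  replace hspan : lineIdeal p s = Ideal.span {g} := hspan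
  refine ⟨g, ?_, hspan⟩
  have hp0 : (p : ℤ) ≠ 0 := Nat.cast_ne_zero.2 hp.out.ne_zero
  obtain ⟨q, hq⟩ : ∃ q, q * g = (p : ℤ) • 1 := by
    rw [← Ideal.mem_span_singleton', ← hspan]
    exact mem_lineIdeal_of_reduction_eq_zero (reduction_eq_zero_iff.2 ⟨1, rfl⟩)
  obtain ⟨d, hd⟩ := dvd_reducedNorm_of_mem_lineIdeal hs
    (hspan ▸ Ideal.mem_span_singleton_self g : g ∈ lineIdeal p s)
  have hmul : (p : ℤ) = d * reducedNorm q := by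
    have hnorm := congrArg reducedNorm hq
    rw [map_mul, hd, reducedNorm_smul, map_one] at hnorm
    exact mul_left_cancel₀ hp0 (by linear_combination -hnorm)
  rcases (Nat.prime_iff_prime_int.1 hp.out).irreducible.isUnit_or_isUnit hmul with hunit | hunit
  · have hd0 : 0 ≤ (p : ℤ) * d := hd ▸ reducedNorm_nonneg g
    rw [hd, Int.isUnit_iff.1 hunit |>.resolve_right (by rintro rfl; omega), mul_one]
  · have hone : reducedNorm q = 1 :=
      (Int.isUnit_iff.1 hunit).resolve_right (by linarith [reducedNorm_nonneg q])
    have hg : g = (p : ℤ) • star q := by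
      have hqg := congrArg (star q * ·) hq
      simpa only [← mul_assoc, star_mul_self_eq_reducedNorm, hone, QuaternionAlgebra.coe_one,
        one_mul, mul_smul_comm, mul_one] using hqg
    obtain ⟨w, hw, hne⟩ := exists_mem_lineIdeal_reduction_ne_zero hs
    rw [hspan, Ideal.mem_span_singleton'] at hw
    obtain ⟨v, rfl⟩ := hw
    rw [map_mul, reduction_eq_zero_iff.2 ⟨_, hg⟩, mul_zero] at hne
    exact absurd rfl hne

theorem existsUnique_mem_lineIdeal (hp3 : p % 3 = 2) {w : EisensteinQuaternion ℤ}
    (hdvd : (p : ℤ) ∣ reducedNorm w) (hw : reduction p w ≠ 0) :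
    ∃! s : {s : Eisenstein (ZMod p) // s.norm = -1}, w ∈ lineIdeal p s.1 := by
  have := Eisenstein.fact_ne_of_mod_three_eq_two hp3
  obtain ⟨x, y, hxy⟩ : ∃ x y, split (reduction p w) = (x, y) := ⟨_, _, rfl⟩
  have hsum : x.norm + y.norm = 0 := by
    rw [← ZMod.intCast_zmod_eq_zero_iff_dvd, ← reducedNorm_reduction, reducedNorm_apply, hxy]
      at hdvd
    exact hdvd
  have hy : y ≠ 0 := by
    rintro rfl
    rw [QuadraticAlgebra.norm_zero, add_zero, QuadraticAlgebra.norm_eq_zero_iff_eq_zero] at hsum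
    rw [hsum, ← Prod.zero_eq_mk, EmbeddingLike.map_eq_zero_iff] at hxy
    exact hw hxy
  have hnorm : (x / y).norm = -1 := by
    have hy' : y.norm ≠ 0 := QuadraticAlgebra.norm_eq_zero_iff_eq_zero.not.2 hy
    have hdiv : (x / y).norm * y.norm = x.norm := by rw [← map_mul, div_mul_cancel₀ x hy]
    exact mul_right_cancel₀ hy' (by linear_combination hdiv + hsum)
  refine ⟨⟨x / y, hnorm⟩, ?_, fun s hs ↦ Subtype.ext ?_⟩
  · simp only [mem_lineIdeal_iff hnorm, hxy, div_mul_cancel₀ x hy]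
  · have hx := (mem_lineIdeal_iff s.2).1 hs
    rw [hxy] at hx
    exact eq_div_of_mul_eq hy hx.symm

end LineIdeal

theorem finite_setOf_reducedNorm_eq (m : ℤ) :
    {w : EisensteinQuaternion ℤ | reducedNorm w = m}.Finite := by
  have hfin := Eisenstein.finite_setOf_norm_le m
  refine ((hfin.prod hfin).preimage split.injective.injOn).subset fun w hw ↦ ?_
  have hx := Eisenstein.norm_nonneg (split w).1
  have hy := Eisenstein.norm_nonneg (split w).2
  rw [Set.mem_ofPred, reducedNorm_apply] at hw
  constructor <;> simp only [Set.mem_ofPred] <;> linarith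

/-- The number of quaternions of reduced norm `m` with integral coefficients. -/
noncomputable def repCount (m : ℤ) : ℕ :=
  Nat.card {w : EisensteinQuaternion ℤ // reducedNorm w = m}

section Hecke

variable {p : ℕ} [hp : Fact p.Prime]

theorem card_mem_lineIdeal {s : Eisenstein (ZMod p)} (hs : s.norm = -1) (m : ℤ) :
    Nat.card {w : {w : EisensteinQuaternion ℤ // reducedNorm w = p * m} // w.1 ∈ lineIdeal p s} =
      repCount m := by
  obtain ⟨g, hg, hspan⟩ := exists_lineIdeal_eq_span hs
  have hp0 : (p : ℤ) ≠ 0 := Nat.cast_ne_zero.2 hp.out.ne_zero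
  have hg0 : g ≠ 0 := by
    rintro rfl
    exact hp0 (by rw [← hg, map_zero])
  have hmem (v : EisensteinQuaternion ℤ) : v * g ∈ lineIdeal p s :=
    hspan ▸ Ideal.mem_span_singleton'.2 ⟨v, rfl⟩
  refine (Nat.card_eq_of_bijective (fun v : {v : EisensteinQuaternion ℤ // reducedNorm v = m} ↦
    ⟨⟨v.1 * g, by rw [map_mul, v.2, hg, mul_comm]⟩, hmem v⟩) ⟨fun v w h ↦ ?_, ?_⟩).symm
  · exact Subtype.ext (mul_right_cancel₀ hg0 congr(($h).1.1))
  · rintro ⟨⟨w, hw⟩, hwI⟩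
    obtain ⟨v, rfl⟩ := Ideal.mem_span_singleton'.1 (hspan ▸ hwI)
    rw [map_mul, hg, mul_comm] at hw
    exact ⟨⟨v, mul_left_cancel₀ hp0 hw⟩, rfl⟩

theorem card_reduction_eq_zero (m : ℤ) :
    Nat.card {w : {w : EisensteinQuaternion ℤ // reducedNorm w = p * m} // reduction p w.1 = 0} =
      Nat.card {v : EisensteinQuaternion ℤ // p * reducedNorm v = m} := by
  have hp0 : (p : ℤ) ≠ 0 := Nat.cast_ne_zero.2 hp.out.ne_zero
  refine (Nat.card_eq_of_bijective (fun v : {v : EisensteinQuaternion ℤ // p * reducedNorm v = m} ↦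
    ⟨⟨(p : ℤ) • v.1, by linear_combination reducedNorm_smul (p : ℤ) v.1 + p * v.2⟩,
      reduction_eq_zero_iff.2 ⟨v.1, rfl⟩⟩) ⟨fun v w h ↦ ?_, ?_⟩).symm
  · exact Subtype.ext (smul_right_injective _ hp0 congr(($h).1.1))
  · rintro ⟨⟨w, hw⟩, hw0⟩
    obtain ⟨v, rfl⟩ := reduction_eq_zero_iff.1 hw0
    rw [reducedNorm_smul, sq, mul_assoc] at hw
    exact ⟨⟨v, mul_left_cancel₀ hp0 hw⟩, rfl⟩

theorem card_lineIdeal_mem (hp3 : p % 3 = 2) {w : EisensteinQuaternion ℤ}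
    (hdvd : (p : ℤ) ∣ reducedNorm w) [Decidable (reduction p w = 0)] :
    Nat.card {s : {s : Eisenstein (ZMod p) // s.norm = -1} // w ∈ lineIdeal p s.1} =
      1 + if reduction p w = 0 then p else 0 := by
  split_ifs with hw
  · rw [add_comm, ← Eisenstein.card_norm_eq hp3 (neg_ne_zero.2 one_ne_zero)]
    exact Nat.card_congr
      (Equiv.subtypeUnivEquiv fun _ ↦ mem_lineIdeal_of_reduction_eq_zero hw)
  · obtain ⟨s, hs, huniq⟩ := existsUnique_mem_lineIdeal hp3 hdvd hw
    exact Nat.card_eq_one_iff_exists.2 ⟨⟨s, hs⟩, fun t ↦ Subtype.ext (huniq t.1 t.2)⟩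

open Classical in
theorem hecke_relation (hp3 : p % 3 = 2) (m : ℤ) :
    (p + 1) * repCount m = repCount (p * m) +
      p * Nat.card {v : EisensteinQuaternion ℤ // p * reducedNorm v = m} := by
  let S := {s : Eisenstein (ZMod p) // s.norm = -1}
  let W := {w : EisensteinQuaternion ℤ // reducedNorm w = p * m}
  have hS : Nat.card S = p + 1 := Eisenstein.card_norm_eq hp3 (neg_ne_zero.2 one_ne_zero)
  have : Finite S := Nat.finite_of_card_ne_zero (by omega)
  have : Finite W := finite_setOf_reducedNorm_eq (p * m)
  have := Fintype.ofFinite S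
  have := Fintype.ofFinite W
  have hdouble : ∑ s : S, Nat.card {w : W // w.1 ∈ lineIdeal p s.1} =
      ∑ w : W, Nat.card {s : S // w.1 ∈ lineIdeal p s.1} := by
    simp only [Nat.card_eq_fintype_card, Fintype.card_subtype]
    exact Finset.sum_card_bipartiteAbove_eq_sum_card_bipartiteBelow
      fun (s : S) (w : W) ↦ w.1 ∈ lineIdeal p s.1
  calc (p + 1) * repCount m = ∑ s : S, Nat.card {w : W // w.1 ∈ lineIdeal p s.1} := by
        rw [Finset.sum_congr rfl fun s _ ↦ card_mem_lineIdeal s.2 m, Finset.sum_const,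
          Finset.card_univ, ← Nat.card_eq_fintype_card, hS, smul_eq_mul]
    _ = ∑ w : W, (1 + if reduction p w.1 = 0 then p else 0) := by
        rw [hdouble]
        exact Finset.sum_congr rfl fun w _ ↦ card_lineIdeal_mem hp3 ⟨m, w.2⟩
    _ = repCount (p * m) + p * Nat.card {w : W // reduction p w.1 = 0} := by
        rw [Finset.sum_add_distrib, ← Finset.sum_filter, Finset.sum_const, Finset.sum_const,
          Finset.card_univ, ← Nat.card_eq_fintype_card, ← Fintype.card_subtype,
          ← Nat.card_eq_fintype_card, smul_eq_mul, mul_one, smul_eq_mul, mul_comm p]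
        rfl
    _ = _ := by rw [card_reduction_eq_zero]

theorem repCount_prime_mul (hp3 : p % 3 = 2) {m : ℤ} (hm : ¬(p : ℤ) ∣ m) :
    repCount (p * m) = (p + 1) * repCount m := by
  have : IsEmpty {v : EisensteinQuaternion ℤ // p * reducedNorm v = m} :=
    ⟨fun v ↦ hm ⟨_, v.2.symm⟩⟩
  rw [hecke_relation hp3, Nat.card_of_isEmpty, mul_zero, add_zero]

theorem repCount_prime_mul_prime_mul (hp3 : p % 3 = 2) (m : ℤ) :
    repCount (p * (p * m)) + p * repCount m = (p + 1) * repCount (p * m) := by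
  have hp0 : (p : ℤ) ≠ 0 := Nat.cast_ne_zero.2 hp.out.ne_zero
  simp_rw [hecke_relation hp3 (p * m), mul_right_inj' hp0, repCount]

theorem sub_one_mul_repCount_prime_pow_mul (hp3 : p % 3 = 2) {m : ℤ} (hm : ¬(p : ℤ) ∣ m) (k : ℕ) :
    ((p : ℤ) - 1) * repCount (p ^ k * m) = (p ^ (k + 1) - 1) * repCount m := by
  induction k using Nat.twoStepInduction with
  | zero => simp
  | one =>
    rw [pow_one, repCount_prime_mul hp3 hm]
    push_cast
    ring
  | more k ih ih' =>
    have hrec := congrArg (Nat.cast : ℕ → ℤ) (repCount_prime_mul_prime_mul hp3 (p ^ k * m))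
    rw [show (p : ℤ) * (p * (p ^ k * m)) = p ^ (k + 2) * m by ring,
      show (p : ℤ) * (p ^ k * m) = p ^ (k + 1) * m by ring] at hrec
    push_cast at hrec
    linear_combination ((p : ℤ) - 1) * hrec + (p + 1) * ih' - p * ih

end Hecke

end EisensteinQuaternion

theorem isThreeCore_iff_isCore {μ : YoungDiagram} : μ.IsThreeCore ↔ IsCore 3 μ := Iff.rfl

namespace Eisenstein

/-- Eisenstein integers congruent to `1` modulo `3`: one from each class of associates prime
to `3`. -/
def IsPrimary (u : Eisenstein ℤ) : Prop :=
  reduction 3 u = 1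

theorem isPrimary_iff {u : Eisenstein ℤ} : IsPrimary u ↔ 3 ∣ u.re - 1 ∧ 3 ∣ u.im := by
  have hre : (u.re : ZMod 3) = 1 ↔ 3 ∣ u.re - 1 := by
    rw [eq_comm]
    exact_mod_cast ZMod.intCast_eq_intCast_iff_dvd_sub 1 u.re 3
  rw [IsPrimary, QuadraticAlgebra.ext_iff]
  exact and_congr hre (ZMod.intCast_zmod_eq_zero_iff_dvd u.im 3)

theorem IsPrimary.norm_cast_eq_one {u : Eisenstein ℤ} (hu : IsPrimary u) :
    (u.norm : ZMod 3) = 1 := by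
  rw [← norm_reduction, hu, map_one]

/-- The primitive sixth root of unity `1 + ω`. -/
def sixthRoot : (Eisenstein ℤ)ˣ :=
  ⟨⟨1, 1⟩, ⟨0, -1⟩, by decide, by decide⟩

theorem norm_units (ε : (Eisenstein ℤ)ˣ) : (ε : Eisenstein ℤ).norm = 1 :=
  (Int.isUnit_iff.1 (ε.isUnit.map QuadraticAlgebra.norm)).resolve_right
    (by linarith [norm_nonneg (ε : Eisenstein ℤ)])

theorem existsUnique_isPrimary_sixthRoot_pow_mul {u : Eisenstein ℤ} (hu : (u.norm : ZMod 3) = 1) :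
    ∃! i : Fin 6, IsPrimary (↑(sixthRoot ^ (i : ℕ)) * u) := by
  have hmod : ∀ x y : ZMod 3, QuadraticAlgebra.norm (⟨x, y⟩ : Eisenstein (ZMod 3)) = 1 →
      ∃! i : Fin 6, (⟨1, 1⟩ : Eisenstein (ZMod 3)) ^ (i : ℕ) * ⟨x, y⟩ = 1 := by
    unfold ExistsUnique
    decide
  have hroot : reduction 3 sixthRoot = ⟨1, 1⟩ := by decide
  rw [← norm_reduction] at hu
  simp only [IsPrimary, map_mul, Units.val_pow_eq_pow_val, map_pow, hroot]
  exact hmod _ _ hu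

/-- Every Eisenstein integer of norm `1` modulo `3` has exactly one primary associate, and there
are six units. -/
noncomputable def sixthRootMulPrimary :
    Fin 6 × {u : Eisenstein ℤ // IsPrimary u} ≃ {u : Eisenstein ℤ // (u.norm : ZMod 3) = 1} :=
  Equiv.ofBijective
    (fun q ↦ ⟨↑(sixthRoot ^ (q.1 : ℕ))⁻¹ * q.2.1, by
      rw [map_mul, norm_units, one_mul, q.2.2.norm_cast_eq_one]⟩) <| by
    refine ⟨fun ⟨i, u, hu⟩ ⟨j, v, hv⟩ h ↦ ?_, fun ⟨u, hu⟩ ↦ ?_⟩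
    · have huv : u = ↑(sixthRoot ^ (i : ℕ)) * (↑(sixthRoot ^ (j : ℕ))⁻¹ * v) :=
        (Units.inv_mul_eq_iff_eq_mul _).1 congr(($h).1)
      obtain rfl : i = j := by
        refine (existsUnique_isPrimary_sixthRoot_pow_mul
          (u := ↑(sixthRoot ^ (j : ℕ))⁻¹ * v) ?_).unique (huv ▸ hu) ?_
        · rw [map_mul, norm_units, one_mul, hv.norm_cast_eq_one]
        · rwa [Units.mul_inv_cancel_left]
      rw [Units.mul_inv_cancel_left] at huv
      simp only [huv]
    · obtain ⟨i, hi, -⟩ := existsUnique_isPrimary_sixthRoot_pow_mul hu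
      exact ⟨(i, ⟨_, hi⟩), Subtype.ext (Units.inv_mul_cancel_left _ u)⟩

/-- The primary Eisenstein integer of a balanced abacus with three runners, chosen so that its norm
is `3 m + 1` for the core of size `m` on that abacus. -/
def primaryOfBeads :
    {a : Fin 3 → ℤ // ∑ r, a r = 0} ≃ {u : Eisenstein ℤ // IsPrimary u} where
  toFun a := ⟨⟨3 * a.1 2 + 1, -3 * a.1 1⟩, isPrimary_iff.2 ⟨⟨a.1 2, by ring⟩, ⟨-a.1 1, by ring⟩⟩⟩
  invFun u := ⟨![u.1.im / 3 - (u.1.re - 1) / 3, -(u.1.im / 3), (u.1.re - 1) / 3], by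
    simp only [Fin.sum_univ_three, Matrix.cons_val]
    ring⟩
  left_inv a := by
    obtain ⟨a, ha⟩ := a
    rw [Fin.sum_univ_three] at ha
    ext i
    fin_cases i <;> simp <;> omega
  right_inv u := by
    obtain ⟨⟨x, hx⟩, ⟨y, hy⟩⟩ := isPrimary_iff.1 u.2
    ext <;> simp <;> omega

theorem norm_primaryOfBeads (a : {a : Fin 3 → ℤ // ∑ r, a r = 0}) :
    (primaryOfBeads a).1.norm = 3 * (coreOfBeads a).1.card + 1 := by
  have hcard := two_mul_card_coreOfBeads a
  have hsum := a.2
  rw [Fin.sum_univ_three] at hsum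
  rw [Fin.sum_univ_three, Fin.sum_univ_three] at hcard
  rw [norm_eq]
  simp only [Fin.val_zero, Fin.val_one, Fin.val_two, Nat.cast_ofNat] at hcard
  simp only [primaryOfBeads, Equiv.coe_fn_mk]
  refine mul_left_cancel₀ two_ne_zero ?_
  linear_combination -3 * hcard - 9 * (a.1 0 - a.1 1 - a.1 2) * hsum

/-- Three-cores of size `n` correspond to primary Eisenstein integers of norm `3 n + 1`. -/
noncomputable def primaryOfThreeCore :
    {μ : YoungDiagram // μ.IsThreeCore} ≃ {u : Eisenstein ℤ // IsPrimary u} :=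
  (Equiv.subtypeEquivRight fun _ ↦ isThreeCore_iff_isCore).trans
    ((Equiv.ofBijective coreOfBeads (coreOfBeads_bijective 3)).symm.trans primaryOfBeads)

theorem norm_primaryOfThreeCore (μ : {μ : YoungDiagram // μ.IsThreeCore}) :
    (primaryOfThreeCore μ).1.norm = 3 * μ.1.card + 1 := by
  rw [primaryOfThreeCore, Equiv.trans_apply, Equiv.trans_apply, norm_primaryOfBeads,
    Equiv.ofBijective_apply_symm_apply coreOfBeads, Equiv.subtypeEquivRight_apply_coe]

/-- Pairs of a unit and a three-core of size `n` correspond to the Eisenstein integers of norm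
`3 n + 1`. -/
noncomputable def associateOfThreeCore :
    Fin 6 × {μ : YoungDiagram // μ.IsThreeCore} ≃
      {u : Eisenstein ℤ // (u.norm : ZMod 3) = 1} :=
  (Equiv.prodCongr (Equiv.refl _) primaryOfThreeCore).trans sixthRootMulPrimary

theorem norm_associateOfThreeCore (q : Fin 6 × {μ : YoungDiagram // μ.IsThreeCore}) :
    (associateOfThreeCore q).1.norm = 3 * q.2.1.card + 1 := by
  rw [← norm_primaryOfThreeCore]
  exact (map_mul _ _ _).trans (by rw [norm_units, one_mul]; rfl)

theorem norm_cast_eq_one_of_add_eq_two {u v : Eisenstein ℤ}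
    (h : (u.norm + v.norm : ZMod 3) = 2) : (u.norm : ZMod 3) = 1 ∧ (v.norm : ZMod 3) = 1 := by
  have hmod : ∀ x y : ZMod 3, QuadraticAlgebra.norm (⟨x, y⟩ : Eisenstein (ZMod 3)) = 0 ∨
      QuadraticAlgebra.norm (⟨x, y⟩ : Eisenstein (ZMod 3)) = 1 := by
    decide
  have hcases (z : Eisenstein ℤ) : (z.norm : ZMod 3) = 0 ∨ (z.norm : ZMod 3) = 1 :=
    norm_reduction 3 z ▸ hmod _ _
  rcases hcases u with hu | hu <;> rcases hcases v with hv | hv <;> rw [hu, hv] at h ⊢ <;>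
    revert h <;> decide

end Eisenstein

namespace EisensteinQuaternion

open Eisenstein

theorem norm_split_cast_eq_one {w : EisensteinQuaternion ℤ} {n : ℕ}
    (hw : reducedNorm w = 3 * n + 2) :
    ((split w).1.norm : ZMod 3) = 1 ∧ ((split w).2.norm : ZMod 3) = 1 := by
  have hthree : (3 : ZMod 3) = 0 := rfl
  apply norm_cast_eq_one_of_add_eq_two
  rw [← Int.cast_add, ← reducedNorm_apply, hw]
  push_cast
  rw [hthree, zero_mul, zero_add]

/-- The quaternion `x + y j`, where `x` and `y` come from two three-cores and two units. -/
noncomputable def ofThreeCores {n : ℕ}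
    (q : (Fin 6 × Fin 6) × {c : YoungDiagram × YoungDiagram //
      c.1.card + c.2.card = n ∧ c.1.IsThreeCore ∧ c.2.IsThreeCore}) :
    {w : EisensteinQuaternion ℤ // reducedNorm w = 3 * n + 2} :=
  ⟨split.symm (associateOfThreeCore (q.1.1, ⟨q.2.1.1, q.2.2.2.1⟩),
      associateOfThreeCore (q.1.2, ⟨q.2.1.2, q.2.2.2.2⟩)), by
    rw [reducedNorm_apply, AddEquiv.apply_symm_apply, norm_associateOfThreeCore,
      norm_associateOfThreeCore]
    have hsize := q.2.2.1
    dsimp only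
    omega⟩

theorem ofThreeCores_bijective (n : ℕ) : Function.Bijective (ofThreeCores (n := n)) := by
  constructor
  · rintro ⟨⟨i, j⟩, ⟨μ, ν⟩, _, hμ, hν⟩ ⟨⟨i', j'⟩, ⟨μ', ν'⟩, _, hμ', hν'⟩ heq
    have hpair := split.symm.injective congr(($heq).1)
    simp only [Prod.mk.injEq, Subtype.val_inj, EmbeddingLike.apply_eq_iff_eq,
      Subtype.mk.injEq] at hpair ⊢
    tauto
  · rintro ⟨w, hw⟩
    obtain ⟨hx, hy⟩ := norm_split_cast_eq_one hw
    obtain ⟨⟨i, μ, hμ⟩, hi⟩ := associateOfThreeCore.surjective ⟨_, hx⟩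
    obtain ⟨⟨j, ν, hν⟩, hj⟩ := associateOfThreeCore.surjective ⟨_, hy⟩
    simp only [Subtype.ext_iff] at hi hj
    have hsize : μ.card + ν.card = n := by
      rw [reducedNorm_apply, ← hi, ← hj, norm_associateOfThreeCore,
        norm_associateOfThreeCore] at hw
      dsimp only at hw
      omega
    refine ⟨((i, j), ⟨(μ, ν), hsize, hμ, hν⟩), Subtype.ext ?_⟩
    exact split.symm_apply_eq.2 (Prod.ext hi hj)

theorem repCount_three_mul_add_two (n : ℕ) : repCount (3 * n + 2) = 36 * A3 n := by
  have hunits : Nat.card (Fin 6 × Fin 6) = 36 := by simp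
  rw [repCount, ← Nat.card_eq_of_bijective _ (ofThreeCores_bijective n), Nat.card_prod, hunits, A3]

end EisensteinQuaternion

/-- For a prime p ≡ 2 (mod 3) with p ∤ 3n+2:
(p−1)·A₃(p²ᵏn + (2p²ᵏ−2)/3) = (p^{2k+1}−1)·A₃(n). -/
theorem A3_mult_two_mod_three (p k n : ℕ) (hp : p.Prime) (hp3 : p % 3 = 2)
    (hpn : ¬ p ∣ 3 * n + 2) :
    (p - 1) * A3 (p ^ (2 * k) * n + (2 * p ^ (2 * k) - 2) / 3) =
      (p ^ (2 * k + 1) - 1) * A3 n := by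
  have : Fact p.Prime := ⟨hp⟩
  have hrep := EisensteinQuaternion.sub_one_mul_repCount_prime_pow_mul (m := 3 * n + 2) hp3
    (mod_cast hpn) (2 * k)
  have hmod : p ^ (2 * k) % 3 = 1 := by
    rw [pow_mul, Nat.pow_mod, Nat.pow_mod p 2, hp3, Nat.one_pow]
  have hdiv : 3 * ((2 * p ^ (2 * k) - 2) / 3) + 2 = 2 * p ^ (2 * k) := by omega
  have hsize : 3 * ((p ^ (2 * k) * n + (2 * p ^ (2 * k) - 2) / 3 : ℕ) : ℤ) + 2 =
      p ^ (2 * k) * (3 * n + 2) := by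
    zify at hdiv
    push_cast
    linear_combination hdiv
  rw [← hsize, EisensteinQuaternion.repCount_three_mul_add_two,
    EisensteinQuaternion.repCount_three_mul_add_two, Nat.cast_mul, Nat.cast_mul,
    mul_left_comm, mul_left_comm _ _ (A3 n : ℤ)] at hrep
  zify [hp.one_le, Nat.one_le_pow (2 * k + 1) p hp.pos]
  exact mul_left_cancel₀ (by norm_num) hrep
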